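/- arXiv:2105.10043 — 3 statements merged into one kernel-verified Lean document; each statement's English description precedes it below -/
import Mathlib

section
/- Let x be a fractionally 2-edge-connected weighted graph on a finite set V, and let A, B be sets with ∅ ≠ A ⊊ B ⊊ V such that x(δ(A)) ≤ 2 + ε and x(δ(B)) ≤ 2 + ε for some ε ≥ 0. Then x(E(A, V ∖ B)) ≤ 1 + ε, and x(E(A, B ∖ A)) ≥ 1 − ε/2. -/
open scoped BigOperators

/-- The cut value `x(δ(S)) = ∑_{u ∈ S, v ∉ S} x u v`. -/
noncomputable def cutVal {V : Type*} [Fintype V] [DecidableEq V]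
    (x : V → V → ℝ) (S : Finset V) : ℝ :=
  ∑ u ∈ S, ∑ v ∈ Sᶜ, x u v

/-- For disjoint `A, B ⊆ V`, `x(E(A,B)) = ∑_{u ∈ A, v ∈ B} x u v`. -/
noncomputable def btwVal {V : Type*} (x : V → V → ℝ) (A B : Finset V) : ℝ :=
  ∑ u ∈ A, ∑ v ∈ B, x u v

/-!
For disjoint `S` and `T`, passing from `x(δ(S)) + x(δ(T))` to `x(δ(S ∪ T))` loses exactly the edges
between `S` and `T`, each counted twice. The two bounds are this identity for the pairs
`A`, `B \ A`, whose union is `B`, and `A`, `V \ B`, whose union is the complement of `B \ A` and so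
has the same cut value as `B \ A`.
-/

section BtwVal

variable {V : Type*} {x : V → V → ℝ}

theorem btwVal_comm (hsymm : ∀ u v, x u v = x v u) (S T : Finset V) :
    btwVal x S T = btwVal x T S := by
  rw [btwVal, Finset.sum_comm]
  exact Finset.sum_congr rfl fun v _ ↦ Finset.sum_congr rfl fun u _ ↦ hsymm u v

variable [DecidableEq V] {S T : Finset V}

theorem btwVal_union_left (x : V → V → ℝ) (hST : Disjoint S T) (U : Finset V) :
    btwVal x (S ∪ T) U = btwVal x S U + btwVal x T U :=
  Finset.sum_union hST

theorem btwVal_union_right (x : V → V → ℝ) (U : Finset V) (hST : Disjoint S T) :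
    btwVal x U (S ∪ T) = btwVal x U S + btwVal x U T := by
  simp only [btwVal, Finset.sum_union hST, Finset.sum_add_distrib]

end BtwVal

section CutVal

variable {V : Type*} [Fintype V] [DecidableEq V] {x : V → V → ℝ}

theorem cutVal_compl (hsymm : ∀ u v, x u v = x v u) (S : Finset V) :
    cutVal x Sᶜ = cutVal x S := by
  simpa only [cutVal, btwVal, compl_compl] using btwVal_comm hsymm Sᶜ S

theorem cutVal_eq_btwVal_univ_sub (x : V → V → ℝ) (S : Finset V) :
    cutVal x S = btwVal x S Finset.univ - btwVal x S S := by
  rw [eq_sub_iff_add_eq', ← Finset.union_compl S, btwVal_union_right x S disjoint_compl_right]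
  rfl

theorem two_mul_btwVal_of_disjoint (hsymm : ∀ u v, x u v = x v u) {S T : Finset V}
    (hST : Disjoint S T) :
    2 * btwVal x S T = cutVal x S + cutVal x T - cutVal x (S ∪ T) := by
  simp only [cutVal_eq_btwVal_univ_sub, btwVal_union_left x hST, btwVal_union_right x _ hST,
    btwVal_comm hsymm T S]
  ring

theorem two_mul_btwVal_sdiff (hsymm : ∀ u v, x u v = x v u) {A B : Finset V} (hAB : A ⊆ B) :
    2 * btwVal x A (B \ A) = cutVal x A + cutVal x (B \ A) - cutVal x B := by
  rw [two_mul_btwVal_of_disjoint hsymm disjoint_sdiff_self_right,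
    Finset.union_sdiff_of_subset hAB]

theorem two_mul_btwVal_compl (hsymm : ∀ u v, x u v = x v u) {A B : Finset V} (hAB : A ⊆ B) :
    2 * btwVal x A Bᶜ = cutVal x A + cutVal x B - cutVal x (B \ A) := by
  have hunion : A ∪ Bᶜ = (B \ A)ᶜ := by
    rw [sdiff_eq, compl_inf, compl_compl, sup_comm, Finset.sup_eq_union]
  rw [two_mul_btwVal_of_disjoint hsymm (disjoint_compl_right.mono_left hAB), hunion,
    cutVal_compl hsymm, cutVal_compl hsymm]

theorem stmt_4_general (hsymm : ∀ u v, x u v = x v u) {A B : Finset V} (hAB : A ⊆ B) {ε : ℝ}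
    (hA : 2 ≤ cutVal x A) (hBA : 2 ≤ cutVal x (B \ A))
    (hcutA : cutVal x A ≤ 2 + ε) (hcutB : cutVal x B ≤ 2 + ε) :
    btwVal x A Bᶜ ≤ 1 + ε ∧ 1 - ε / 2 ≤ btwVal x A (B \ A) := by
  have hcompl := two_mul_btwVal_compl hsymm hAB
  have hsdiff := two_mul_btwVal_sdiff hsymm hAB
  constructor <;> linarith

end CutVal

/-- If `∅ ≠ A ⊊ B ⊊ V` are two `ε`-near min cuts of a fractionally 2-edge-connected
weighted graph, then `x(E(A, V ∖ B)) ≤ 1 + ε` and `x(E(A, B ∖ A)) ≥ 1 − ε/2`. -/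
theorem stmt_4 {V : Type*} [Fintype V] [DecidableEq V]
    (x : V → V → ℝ)
    (hsymm : ∀ u v, x u v = x v u)
    (hnonneg : ∀ u v, 0 ≤ x u v)
    (hdiag : ∀ v, x v v = 0)
    (h2ec : ∀ S : Finset V, S.Nonempty → S ≠ Finset.univ → 2 ≤ cutVal x S)
    (A B : Finset V) (hA : A.Nonempty) (hAB : A ⊂ B) (hBuniv : B ⊂ Finset.univ)
    (ε : ℝ) (hε : 0 ≤ ε)
    (hcutA : cutVal x A ≤ 2 + ε) (hcutB : cutVal x B ≤ 2 + ε) :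
    btwVal x A Bᶜ ≤ 1 + ε ∧ 1 - ε / 2 ≤ btwVal x A (B \ A) := by
  have hBA_ne_univ : B \ A ≠ Finset.univ := (Finset.sdiff_subset.trans_ssubset hBuniv).ne
  exact stmt_4_general hsymm hAB.subset (h2ec A hA (hAB.trans hBuniv).ne)
    (h2ec (B \ A) (Finset.sdiff_nonempty.2 hAB.2) hBA_ne_univ) hcutA hcutB
end

section
/- Let G = (V, E) be a finite simple graph with edge weights x : E → ℝ≥0 and let μ be a distribution over spanning trees of G with marginals x. Let A, B ⊆ V be disjoint nonempty sets such that every vertex v ∈ A ∪ B satisfies x(δ({v})) = 2, and suppose x(δ(A)) ≤ 2 + ε_A, x(δ(B)) ≤ 2 + ε_B, and x(δ(A ∪ B)) ≤ 2 + ε_{A∪B} for some ε_A, ε_B, ε_{A∪B} ≥ 0. Then the probability under μ that the sampled spanning tree T has exactly one edge in E(A,B) is at least 1 − (ε_A + ε_B + ε_{A∪B})/2. -/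
open scoped BigOperators Classical

/-- The edges of `E` with exactly one endpoint in `S` (the cut `δ(S)`). -/
noncomputable def cutEdges {V : Type*} (E : Finset (Sym2 V)) (S : Finset V) :
    Finset (Sym2 V) :=
  E.filter (fun e => ∃ a b : V, e = s(a, b) ∧ a ∈ S ∧ b ∉ S)

/-- The edges of `E` with one endpoint in `A` and one endpoint in `B` (the set `E(A,B)`). -/
noncomputable def betweenEdges {V : Type*} (E : Finset (Sym2 V)) (A B : Finset V) :
    Finset (Sym2 V) :=
  E.filter (fun e => ∃ a b : V, e = s(a, b) ∧ a ∈ A ∧ b ∈ B)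

/-- `T` is a spanning tree of the vertex set `V`: the graph on `V` with edge set `T`
is connected and acyclic. -/
def IsSpanningTree {V : Type*} (T : Finset (Sym2 V)) : Prop :=
  (SimpleGraph.fromEdgeSet (T : Set (Sym2 V))).Connected ∧
    (SimpleGraph.fromEdgeSet (T : Set (Sym2 V))).IsAcyclic

/-!
For a forest `F` and a nonempty vertex set `S`, the deficit `|S| - 1 - |F ∩ E(S)|` is a nonnegative
integer. Counting the edges inside `A ∪ B` gives
`|F ∩ E(A, B)| = 1 + deficit A + deficit B - deficit (A ∪ B)`, so a sampled tree can fail to have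
exactly one edge in `E(A, B)` only if one of the three deficits is at least `1`. By double counting,
vertex degrees at least `2` and `x(δ(S)) ≤ 2 + ε` force the expected deficit of `S` to be at most
`ε / 2`, and Markov's inequality applied to the sum of the three deficits finishes the proof.
-/

open Finset

section EdgeSets

variable {V : Type*}

/-- The set `E(S)` of edges of `E` with both endpoints in `S`. Loops are left out, so that the
handshake identity and the forest bound hold for every `E`. -/
noncomputable def insideEdges (E : Finset (Sym2 V)) (S : Finset V) : Finset (Sym2 V) :=
  E.filter (fun e => ∃ a b : V, e = s(a, b) ∧ a ≠ b ∧ a ∈ S ∧ b ∈ S)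

lemma insideEdges_subset (E : Finset (Sym2 V)) (S : Finset V) : insideEdges E S ⊆ E :=
  filter_subset _ _

lemma exists_mk_eq_mk_and_iff (P : V → V → Prop) (a b : V) :
    (∃ c d, s(a, b) = s(c, d) ∧ P c d) ↔ P a b ∨ P b a := by
  simp only [Sym2.eq_iff]
  grind

lemma mk_mem_insideEdges {E : Finset (Sym2 V)} {S : Finset V} {a b : V} :
    s(a, b) ∈ insideEdges E S ↔ s(a, b) ∈ E ∧ a ≠ b ∧ a ∈ S ∧ b ∈ S := by
  simp only [insideEdges, mem_filter,
    exists_mk_eq_mk_and_iff (fun c d => c ≠ d ∧ c ∈ S ∧ d ∈ S)]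
  grind

lemma mk_mem_betweenEdges {E : Finset (Sym2 V)} {A B : Finset V} {a b : V} :
    s(a, b) ∈ betweenEdges E A B ↔ s(a, b) ∈ E ∧ (a ∈ A ∧ b ∈ B ∨ b ∈ A ∧ a ∈ B) := by
  simp only [betweenEdges, mem_filter, exists_mk_eq_mk_and_iff (fun c d => c ∈ A ∧ d ∈ B)]

lemma inter_insideEdges [DecidableEq V] (T E : Finset (Sym2 V)) (S : Finset V) :
    T ∩ insideEdges E S = insideEdges (T ∩ E) S :=
  inter_filter _ _ _

lemma inter_betweenEdges [DecidableEq V] (T E : Finset (Sym2 V)) (A B : Finset V) :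
    T ∩ betweenEdges E A B = betweenEdges (T ∩ E) A B :=
  inter_filter _ _ _

lemma sum_sum_cutEdges_singleton {M : Type*} [AddCommMonoid M] (E : Finset (Sym2 V))
    (x : Sym2 V → M) (S : Finset V) :
    ∑ v ∈ S, ∑ e ∈ cutEdges E {v}, x e =
      2 • ∑ e ∈ insideEdges E S, x e + ∑ e ∈ cutEdges E S, x e := by
  simp only [cutEdges, insideEdges, sum_filter]
  rw [sum_comm, smul_sum, ← sum_add_distrib]
  refine sum_congr rfl fun e _ => ?_
  induction e with | _ a b
  have hcut (U : Finset V) := exists_mk_eq_mk_and_iff (fun c d => c ∈ U ∧ d ∉ U) a b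
  have hinside := exists_mk_eq_mk_and_iff (fun c d => c ≠ d ∧ c ∈ S ∧ d ∈ S) a b
  simp only [hcut, hinside]
  obtain rfl | hab := eq_or_ne a b
  · simp
  have hendpoints (v : V) :
      (if a ∈ ({v} : Finset V) ∧ b ∉ ({v} : Finset V) ∨
          b ∈ ({v} : Finset V) ∧ a ∉ ({v} : Finset V) then x s(a, b) else 0) =
        (if a = v then x s(a, b) else 0) + (if b = v then x s(a, b) else 0) := by
    grind
  simp only [hendpoints, sum_add_distrib, sum_ite_eq]
  by_cases ha : a ∈ S <;> by_cases hb : b ∈ S <;> simp [ha, hb, hab, hab.symm, two_nsmul]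

variable {A B : Finset V}

lemma disjoint_insideEdges (E : Finset (Sym2 V)) (hAB : Disjoint A B) :
    Disjoint (insideEdges E A) (insideEdges E B) := by
  refine disjoint_left.2 fun e hA hB => ?_
  induction e with | _ a b
  exact disjoint_left.1 hAB (mk_mem_insideEdges.1 hA).2.2.1 (mk_mem_insideEdges.1 hB).2.2.1

variable [DecidableEq V]

lemma insideEdges_union (E : Finset (Sym2 V)) (hAB : Disjoint A B) :
    insideEdges E (A ∪ B) = insideEdges E A ∪ insideEdges E B ∪ betweenEdges E A B := by
  ext e
  induction e with | _ a b
  have hnotMem := disjoint_left.1 hAB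
  simp only [mem_union, mk_mem_insideEdges, mk_mem_betweenEdges]
  grind

lemma disjoint_insideEdges_union_betweenEdges (E : Finset (Sym2 V)) (hAB : Disjoint A B) :
    Disjoint (insideEdges E A ∪ insideEdges E B) (betweenEdges E A B) := by
  refine disjoint_left.2 fun e => ?_
  induction e with | _ a b
  have hnotMem := disjoint_left.1 hAB
  simp only [mem_union, mk_mem_insideEdges, mk_mem_betweenEdges]
  grind

lemma card_insideEdges_union (E : Finset (Sym2 V)) (hAB : Disjoint A B) :
    #(insideEdges E (A ∪ B)) =
      #(insideEdges E A) + #(insideEdges E B) + #(betweenEdges E A B) := by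
  rw [insideEdges_union E hAB,
    card_union_of_disjoint (disjoint_insideEdges_union_betweenEdges E hAB),
    card_union_of_disjoint (disjoint_insideEdges E hAB)]

end EdgeSets

section Forests

variable {V : Type*}

lemma card_edgeFinset_add_one_le_of_isAcyclic [Fintype V] [Nonempty V] {F : SimpleGraph V}
    [Fintype F.edgeSet] (hF : F.IsAcyclic) : #F.edgeFinset + 1 ≤ Fintype.card V := by
  obtain ⟨T, hFT, -, hT⟩ :=
    SimpleGraph.connected_top.exists_isTree_le_of_le_of_isAcyclic le_top hF
  rw [← hT.card_edgeFinset]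
  gcongr

lemma card_insideEdges_add_one_le {F : Finset (Sym2 V)}
    (hF : (SimpleGraph.fromEdgeSet (F : Set (Sym2 V))).IsAcyclic)
    {S : Finset V} (hS : S.Nonempty) : #(insideEdges F S) + 1 ≤ #S := by
  have : Nonempty S := hS.to_subtype
  set H := (SimpleGraph.fromEdgeSet (F : Set (Sym2 V))).induce (S : Set V)
  have hsub : insideEdges F S ⊆ H.edgeFinset.image (Sym2.map Subtype.val) := by
    intro e he
    induction e with | _ a b
    obtain ⟨heF, hab, ha, hb⟩ := mk_mem_insideEdges.1 he
    refine mem_image.2 ⟨s(⟨a, ha⟩, ⟨b, hb⟩), ?_, rfl⟩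
    simpa [H] using ⟨heF, hab⟩
  calc #(insideEdges F S) + 1 ≤ #H.edgeFinset + 1 := by
        gcongr
        exact (card_le_card hsub).trans card_image_le
    _ ≤ Fintype.card S := card_edgeFinset_add_one_le_of_isAcyclic (hF.induce _)
    _ = #S := Fintype.card_coe S

/-- The deficit of `S` in the edge set `F`: the number of edges that `F` lacks inside `S` compared
with a spanning tree of `S`. It is an integer so that the subtraction does not truncate. -/
noncomputable def treeDeficit (F : Finset (Sym2 V)) (S : Finset V) : ℤ :=
  #S - 1 - #(insideEdges F S)

lemma treeDeficit_nonneg {F : Finset (Sym2 V)}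
    (hF : (SimpleGraph.fromEdgeSet (F : Set (Sym2 V))).IsAcyclic)
    {S : Finset V} (hS : S.Nonempty) : 0 ≤ treeDeficit F S := by
  have := card_insideEdges_add_one_le hF hS
  unfold treeDeficit
  lia

variable [DecidableEq V] {A B : Finset V}

lemma card_betweenEdges_eq_treeDeficit (F : Finset (Sym2 V)) (hAB : Disjoint A B) :
    (#(betweenEdges F A B) : ℤ) =
      1 + treeDeficit F A + treeDeficit F B - treeDeficit F (A ∪ B) := by
  have hinside := card_insideEdges_union F hAB
  have hcard := card_union_of_disjoint hAB
  unfold treeDeficit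
  lia

lemma one_le_treeDeficit_add_of_card_betweenEdges_ne_one {F : Finset (Sym2 V)}
    (hF : (SimpleGraph.fromEdgeSet (F : Set (Sym2 V))).IsAcyclic) (hAB : Disjoint A B)
    (hA : A.Nonempty) (hB : B.Nonempty) (hne : #(betweenEdges F A B) ≠ 1) :
    1 ≤ treeDeficit F A + treeDeficit F B + treeDeficit F (A ∪ B) := by
  have hdA := treeDeficit_nonneg hF hA
  have hdB := treeDeficit_nonneg hF hB
  have hdAB := treeDeficit_nonneg hF (hA.inl (t := B))
  have hbetween := card_betweenEdges_eq_treeDeficit F hAB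
  lia

end Forests

section Expectation

lemma sum_mul_card_inter {ι R : Type*} [DecidableEq ι] [NonAssocSemiring R]
    (s : Finset (Finset ι)) (μ : Finset ι → R) (F : Finset ι) :
    ∑ T ∈ s, μ T * #(T ∩ F) = ∑ e ∈ F, ∑ T ∈ s with e ∈ T, μ T := by
  simp only [sum_filter]
  rw [sum_comm]
  refine sum_congr rfl fun T _ => ?_
  rw [sum_ite_mem, sum_const, nsmul_eq_mul', inter_comm]

lemma sum_mul_treeDeficit_inter {V R : Type*} [Fintype V] [DecidableEq V] [Ring R]
    {E : Finset (Sym2 V)} {x : Sym2 V → R} {μ : Finset (Sym2 V) → R} (hsum : ∑ T, μ T = 1)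
    (hmarg : ∀ e ∈ E, ∑ T with e ∈ T, μ T = x e) (S : Finset V) :
    ∑ T, μ T * treeDeficit (T ∩ E) S = #S - 1 - ∑ e ∈ insideEdges E S, x e := by
  have hinside : ∑ T, μ T * (#(insideEdges (T ∩ E) S) : R) = ∑ e ∈ insideEdges E S, x e := by
    simp only [← inter_insideEdges, sum_mul_card_inter]
    exact sum_congr rfl fun e he => hmarg e (insideEdges_subset E S he)
  simp only [treeDeficit, Int.cast_sub, Int.cast_natCast, Int.cast_one, mul_sub (μ _),
    sum_sub_distrib, ← sum_mul, hsum, one_mul, hinside]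

/-- Markov's inequality for the weights `μ` and the threshold `1`, in complementary form. -/
lemma sum_sub_sum_mul_le_sum_filter {α R : Type*} [Ring R] [PartialOrder R] [IsOrderedRing R]
    {s : Finset α} {p : α → Prop} [DecidablePred p] {μ f : α → R}
    (hμ : ∀ a ∈ s, 0 ≤ μ a) (hf : ∀ a ∈ s, μ a ≠ 0 → 0 ≤ f a)
    (hfp : ∀ a ∈ s, μ a ≠ 0 → ¬ p a → 1 ≤ f a) :
    ∑ a ∈ s, μ a - ∑ a ∈ s, μ a * f a ≤ ∑ a ∈ s with p a, μ a := by
  rw [sum_filter, ← sum_sub_distrib]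
  refine sum_le_sum fun a ha => ?_
  obtain hzero | hpos := (hμ a ha).eq_or_lt
  · simp [← hzero]
  split_ifs with hpa
  · exact sub_le_self _ (mul_nonneg hpos.le (hf a ha hpos.ne'))
  · exact sub_nonpos.2 (le_mul_of_one_le_right hpos.le (hfp a ha hpos.ne' hpa))

variable {V 𝕜 : Type*} [Field 𝕜] [LinearOrder 𝕜] [IsStrictOrderedRing 𝕜]
  {E : Finset (Sym2 V)} {x : Sym2 V → 𝕜}

lemma card_sub_one_sub_sum_insideEdges_le {S : Finset V}
    (hdeg : ∀ v ∈ S, 2 ≤ ∑ e ∈ cutEdges E {v}, x e) {ε : 𝕜}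
    (hcut : ∑ e ∈ cutEdges E S, x e ≤ 2 + ε) :
    #S - 1 - ∑ e ∈ insideEdges E S, x e ≤ ε / 2 := by
  have hsum := card_nsmul_le_sum S _ 2 hdeg
  rw [sum_sum_cutEdges_singleton, nsmul_eq_mul, two_nsmul] at hsum
  linarith

theorem stmt_6_general [Fintype V] [DecidableEq V] {μ : Finset (Sym2 V) → 𝕜}
    (hμ0 : ∀ T, 0 ≤ μ T)
    (hsupp : ∀ T, μ T ≠ 0 → (SimpleGraph.fromEdgeSet (T : Set (Sym2 V))).IsAcyclic)
    (hsum : ∑ T, μ T = 1) (hmarg : ∀ e ∈ E, ∑ T with e ∈ T, μ T = x e)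
    {A B : Finset V} (hdisj : Disjoint A B) (hA : A.Nonempty) (hB : B.Nonempty)
    (hdeg : ∀ v ∈ A ∪ B, 2 ≤ ∑ e ∈ cutEdges E {v}, x e) {εA εB εAB : 𝕜}
    (hcutA : ∑ e ∈ cutEdges E A, x e ≤ 2 + εA)
    (hcutB : ∑ e ∈ cutEdges E B, x e ≤ 2 + εB)
    (hcutAB : ∑ e ∈ cutEdges E (A ∪ B), x e ≤ 2 + εAB) :
    1 - (εA + εB + εAB) / 2 ≤ ∑ T with #(T ∩ betweenEdges E A B) = 1, μ T := by
  have hforest {T} (hT : μ T ≠ 0) :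
      (SimpleGraph.fromEdgeSet ((T ∩ E : Finset (Sym2 V)) : Set (Sym2 V))).IsAcyclic :=
    (hsupp T hT).anti (SimpleGraph.fromEdgeSet_mono (coe_subset.2 inter_subset_left))
  have hdeficit {S : Finset V} {ε : 𝕜} (hS : S ⊆ A ∪ B)
      (hcut : ∑ e ∈ cutEdges E S, x e ≤ 2 + ε) : ∑ T, μ T * treeDeficit (T ∩ E) S ≤ ε / 2 :=
    (sum_mul_treeDeficit_inter hsum hmarg S).trans_le
      (card_sub_one_sub_sum_insideEdges_le (fun v hv => hdeg v (hS hv)) hcut)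
  let f (T : Finset (Sym2 V)) : ℤ :=
    treeDeficit (T ∩ E) A + treeDeficit (T ∩ E) B + treeDeficit (T ∩ E) (A ∪ B)
  have hmarkov : ∑ T, μ T - ∑ T, μ T * (f T : 𝕜) ≤ ∑ T with #(T ∩ betweenEdges E A B) = 1, μ T := by
    refine sum_sub_sum_mul_le_sum_filter (fun T _ => hμ0 T) (fun T _ hT => ?_)
      fun T _ hT hne => ?_
    · exact_mod_cast add_nonneg (add_nonneg (treeDeficit_nonneg (hforest hT) hA)
        (treeDeficit_nonneg (hforest hT) hB)) (treeDeficit_nonneg (hforest hT) hA.inl)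
    · rw [inter_betweenEdges] at hne
      exact_mod_cast
        one_le_treeDeficit_add_of_card_betweenEdges_ne_one (hforest hT) hdisj hA hB hne
  simp only [f, Int.cast_add, mul_add, sum_add_distrib, hsum] at hmarkov
  linarith [hdeficit subset_union_left hcutA, hdeficit subset_union_right hcutB,
    hdeficit Subset.rfl hcutAB]

end Expectation

/-- If `μ` is a distribution over spanning trees with marginals `x`, `A, B` are disjoint
nonempty sets whose vertices all satisfy `x(δ(v)) = 2`, and `A`, `B`, `A ∪ B` are
`ε_A`-, `ε_B`-, `ε_{A∪B}`-near min cuts respectively, then the sampled tree `T` has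
exactly one edge in `E(A,B)` with probability at least `1 − (ε_A + ε_B + ε_{A∪B})/2`. -/
theorem stmt_6 {V : Type*} [Fintype V] [DecidableEq V]
    (E : Finset (Sym2 V)) (hE : ∀ e ∈ E, ¬ e.IsDiag)
    (x : Sym2 V → ℝ) (hx : ∀ e, 0 ≤ x e)
    (μ : Finset (Sym2 V) → ℝ)
    (hμ0 : ∀ T, 0 ≤ μ T)
    (hsupp : ∀ T, μ T ≠ 0 → T ⊆ E ∧ IsSpanningTree T)
    (hsum : ∑ T : Finset (Sym2 V), μ T = 1)
    (hmarg : ∀ e ∈ E, ∑ T ∈ Finset.univ.filter (fun T => e ∈ T), μ T = x e)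
    (A B : Finset V) (hdisj : Disjoint A B) (hA : A.Nonempty) (hB : B.Nonempty)
    (hdeg : ∀ v ∈ A ∪ B, ∑ e ∈ cutEdges E {v}, x e = 2)
    (εA εB εAB : ℝ) (hεA : 0 ≤ εA) (hεB : 0 ≤ εB) (hεAB : 0 ≤ εAB)
    (hcutA : ∑ e ∈ cutEdges E A, x e ≤ 2 + εA)
    (hcutB : ∑ e ∈ cutEdges E B, x e ≤ 2 + εB)
    (hcutAB : ∑ e ∈ cutEdges E (A ∪ B), x e ≤ 2 + εAB) :
    1 - (εA + εB + εAB) / 2 ≤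
      ∑ T ∈ Finset.univ.filter
        (fun T => (T ∩ betweenEdges E A B).card = 1), μ T :=
  stmt_6_general hμ0 (fun T hT => (hsupp T hT).2.2) hsum hmarg hdisj hA hB
    (fun v hv => (hdeg v hv).ge) hcutA hcutB hcutAB
end

section
/- Let V be a finite set, let u₀, v₀ ∈ V be distinct, and let N be a family of cuts of V such that every S ∈ N satisfies u₀ ∉ S and v₀ ∉ S. Then for any two elements u, v ∈ V, there is at most one connected component C of N (under the crossing relation) with the property that u and v lie in two distinct atoms of C, neither of which is the atom of C containing u₀ and v₀. -/
open scoped Classical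

/-- Two sets `A, B ⊆ V` cross if `A ∩ B`, `A \ B`, `B \ A` and `V \ (A ∪ B)` are all nonempty. -/
def CutCrosses {V : Type*} [Fintype V] [DecidableEq V] (A B : Finset V) : Prop :=
  (A ∩ B).Nonempty ∧ (A \ B).Nonempty ∧ (B \ A).Nonempty ∧ ((A ∪ B)ᶜ).Nonempty

/-- The crossing relation restricted to the family `N`. -/
def crossRel {V : Type*} [Fintype V] [DecidableEq V] (N : Set (Finset V))
    (A B : Finset V) : Prop :=
  A ∈ N ∧ B ∈ N ∧ CutCrosses A B

/-- `C` is a connected component of the family `N` under the crossing relation: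
it is an equivalence class of `N` under the reflexive–transitive closure of the
crossing relation restricted to `N`. -/
def IsCutComponent {V : Type*} [Fintype V] [DecidableEq V] (N : Set (Finset V))
    (C : Set (Finset V)) : Prop :=
  ∃ S₀ ∈ N, C = {S | S ∈ N ∧ Relation.ReflTransGen (crossRel N) S₀ S}

/-- The atom of the component `C` containing `u`: all vertices that lie in exactly the
same cuts of `C` as `u` does. -/
noncomputable def atomOf {V : Type*} [Fintype V] [DecidableEq V]
    (C : Set (Finset V)) (u : V) : Finset V :=
  Finset.univ.filter (fun v => ∀ S ∈ C, (v ∈ S ↔ u ∈ S))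

/-!
Only the bipartition `{S, Sᶜ}` of a cut matters for crossing: two cuts fail to cross iff a side of
one is contained in a side of the other. If `T` crosses no cut of a component `C`, then some side
of `T` lies in a single atom of `C`: were `t ⊆ X` and `tᶜ ⊆ Y` for sides `t` of `T` and `X`, `Y` of
crossing cuts, then `Xᶜ ⊆ Y`, which is impossible, so the side `t` that is not split by one cut of
`C` is not split by its crossing neighbours either. Let `C'` be another component. Sides of
crossing cuts intersect, so all cuts of `C'` have a side in one and the same atom `a` of `C`, and
`C'` does not separate points outside `a`. If `C` puts three points into distinct atoms, two of
them lie outside `a`, hence in the same atom of `C'`.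
-/

section CutSides

variable {V : Type*} [Fintype V] [DecidableEq V] {A B S S' T t X : Finset V}

/-- The two sides of the cut `A`, that is, the parts of the bipartition of `V` it induces. They
let arguments about crossing treat a cut and its complement alike. -/
def cutSides (A : Finset V) : Set (Finset V) :=
  {A, Aᶜ}

theorem compl_mem_cutSides (hX : X ∈ cutSides A) : Xᶜ ∈ cutSides A := by
  rcases hX with rfl | rfl
  · exact Or.inr rfl
  · exact Or.inl (compl_compl A)

theorem eq_or_eq_compl_of_mem_cutSides (ht : t ∈ cutSides T) (hX : X ∈ cutSides T) :
    X = t ∨ X = tᶜ := by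
  rcases ht with rfl | rfl <;> rcases hX with rfl | rfl <;>
    simp only [compl_compl, true_or, or_true]

theorem mem_iff_mem_of_mem_cutSides {u v : V} (hX : X ∈ cutSides A) (h : u ∈ X ↔ v ∈ X) :
    u ∈ A ↔ v ∈ A := by
  rcases hX with rfl | rfl
  · exact h
  · simpa only [Finset.mem_compl, not_iff_not] using h

theorem not_cutCrosses_iff :
    ¬ CutCrosses A B ↔ ∃ X ∈ cutSides A, ∃ Y ∈ cutSides B, X ⊆ Y := by
  simp only [CutCrosses, cutSides, Set.mem_insert_iff, Set.mem_singleton_iff, exists_eq_or_imp,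
    exists_eq_left, Finset.subset_iff, Finset.Nonempty, Finset.mem_inter, Finset.mem_sdiff,
    Finset.mem_compl, Finset.mem_union]
  grind

theorem CutCrosses.symm (h : CutCrosses A B) : CutCrosses B A :=
  ⟨Finset.inter_comm A B ▸ h.1, h.2.2.1, h.2.1, Finset.union_comm A B ▸ h.2.2.2⟩

theorem CutCrosses.not_subset {Y : Finset V} (h : CutCrosses A B) (hX : X ∈ cutSides A)
    (hY : Y ∈ cutSides B) : ¬ X ⊆ Y :=
  fun hXY => not_cutCrosses_iff.2 ⟨X, hX, Y, hY, hXY⟩ h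

theorem CutCrosses.inter_nonempty {Y : Finset V} (h : CutCrosses A B) (hX : X ∈ cutSides A)
    (hY : Y ∈ cutSides B) : (X ∩ Y).Nonempty := by
  rw [← Finset.not_disjoint_iff_nonempty_inter, ← Finset.subset_compl_iff_disjoint_right]
  exact h.not_subset hX (compl_mem_cutSides hY)

theorem CutCrosses.exists_cutSides_superset (hSS' : CutCrosses S S') (hTS' : ¬ CutCrosses T S')
    (ht : t ∈ cutSides T) (htS : ∃ X ∈ cutSides S, t ⊆ X) : ∃ Y ∈ cutSides S', t ⊆ Y := by
  obtain ⟨X, hX, htX⟩ := htS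
  obtain ⟨t', ht', Y, hY, htY⟩ := not_cutCrosses_iff.1 hTS'
  rcases eq_or_eq_compl_of_mem_cutSides ht ht' with rfl | rfl
  · exact ⟨Y, hY, htY⟩
  · have hXY : Xᶜ ⊆ Y := (Finset.compl_subset_compl.2 htX).trans htY
    exact absurd hXY (hSS'.not_subset (compl_mem_cutSides hX) hY)

end CutSides

section Atoms

variable {V : Type*} [Fintype V] [DecidableEq V] {C : Set (Finset V)} {t : Finset V} {x y : V}

theorem mem_atomOf : y ∈ atomOf C x ↔ ∀ S ∈ C, (y ∈ S ↔ x ∈ S) := by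
  simp only [atomOf, Finset.mem_filter, Finset.mem_univ, true_and]

theorem atomOf_eq_of_mem (h : y ∈ atomOf C x) : atomOf C y = atomOf C x := by
  ext z
  simp only [mem_atomOf]
  exact forall₂_congr fun S hS => by rw [mem_atomOf.1 h S hS]

theorem subset_atomOf (ht : ∀ S ∈ C, ∃ X ∈ cutSides S, t ⊆ X) (hx : x ∈ t) :
    t ⊆ atomOf C x := by
  refine fun y hy => mem_atomOf.2 fun S hS => ?_
  obtain ⟨X, hX, htX⟩ := ht S hS
  exact mem_iff_mem_of_mem_cutSides hX (iff_of_true (htX hy) (htX hx))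

end Atoms

namespace IsCutComponent

variable {V : Type*} [Fintype V] [DecidableEq V] {N C C' : Set (Finset V)} {A B T : Finset V}

theorem nonempty (hC : IsCutComponent N C) : C.Nonempty := by
  obtain ⟨S₀, hS₀, rfl⟩ := hC
  exact ⟨S₀, hS₀, .refl⟩

theorem subset (hC : IsCutComponent N C) : C ⊆ N := by
  obtain ⟨S₀, -, rfl⟩ := hC
  exact fun _ hS => hS.1

theorem mem_of_cutCrosses (hC : IsCutComponent N C) (hA : A ∈ C) (hB : B ∈ N)
    (h : CutCrosses A B) : B ∈ C := by
  have hAN := hC.subset hA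
  obtain ⟨S₀, -, rfl⟩ := hC
  exact ⟨hB, hA.2.tail ⟨hAN, hB, h⟩⟩

theorem reflTransGen (hC : IsCutComponent N C) (hA : A ∈ C) (hB : B ∈ C) :
    Relation.ReflTransGen (crossRel N) A B := by
  have : Std.Symm (crossRel N) := ⟨fun _ _ h => ⟨h.2.1, h.1, h.2.2.symm⟩⟩
  obtain ⟨S₀, -, rfl⟩ := hC
  exact (symm hA.2).trans hB.2

theorem induction_on (hC : IsCutComponent N C) {p : Finset V → Prop} (hA : A ∈ C) (hpA : p A)
    (hp : ∀ S ∈ C, ∀ S' ∈ C, CutCrosses S S' → p S → p S') (hB : B ∈ C) : p B := by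
  induction hC.reflTransGen hA hB with
  | refl => exact hpA
  | @tail S S' _ hSS' ih =>
    have hS : S ∈ C := hC.mem_of_cutCrosses hB hSS'.1 hSS'.2.2.symm
    exact hp S hS S' hB hSS'.2.2 (ih hS)

theorem subset_of_mem (hC : IsCutComponent N C) (hC' : IsCutComponent N C') (hA : A ∈ C)
    (hA' : A ∈ C') : C ⊆ C' := fun _ hB =>
  hC.induction_on hA hA'
    (fun _ _ _ hS' h hS => hC'.mem_of_cutCrosses hS (hC.subset hS') h) hB

theorem eq_of_mem (hC : IsCutComponent N C) (hC' : IsCutComponent N C') (hA : A ∈ C)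
    (hA' : A ∈ C') : C = C' :=
  (hC.subset_of_mem hC' hA hA').antisymm (hC'.subset_of_mem hC hA' hA)

theorem not_cutCrosses (hC : IsCutComponent N C) (hC' : IsCutComponent N C') (hne : C ≠ C')
    (hA : A ∈ C) (hB : B ∈ C') : ¬ CutCrosses A B :=
  fun h => hne (hC.eq_of_mem hC' (hC.mem_of_cutCrosses hA (hC'.subset hB) h) hB)

theorem exists_cutSides_subset_atomOf [Nonempty V] (hC : IsCutComponent N C)
    (hT : ∀ S ∈ C, ¬ CutCrosses T S) : ∃ t ∈ cutSides T, ∃ x, t ⊆ atomOf C x := by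
  obtain ⟨A, hA⟩ := hC.nonempty
  obtain ⟨t, ht, htA⟩ := not_cutCrosses_iff.1 (hT A hA)
  have unsplit : ∀ S ∈ C, ∃ X ∈ cutSides S, t ⊆ X := fun S hS =>
    hC.induction_on hA htA
      (fun _ _ S' hS' hSS' => hSS'.exists_cutSides_superset (hT S' hS') ht) hS
  rcases t.eq_empty_or_nonempty with rfl | ⟨x, hx⟩
  · exact ⟨∅, ht, Classical.arbitrary V, Finset.empty_subset _⟩
  · exact ⟨t, ht, x, subset_atomOf unsplit hx⟩

theorem exists_forall_cutSides_subset_atomOf [Nonempty V] (hC : IsCutComponent N C)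
    (hC' : IsCutComponent N C') (hne : C ≠ C') :
    ∃ x, ∀ T ∈ C', ∃ t ∈ cutSides T, t ⊆ atomOf C x := by
  have side_in_atom : ∀ T ∈ C', ∃ t ∈ cutSides T, ∃ x, t ⊆ atomOf C x := fun T hT =>
    hC.exists_cutSides_subset_atomOf fun _ hS => hC'.not_cutCrosses hC hne.symm hT hS
  obtain ⟨A, hA⟩ := hC'.nonempty
  obtain ⟨a, ha, x, hax⟩ := side_in_atom A hA
  refine ⟨x, fun T hT => hC'.induction_on (p := fun S => ∃ s ∈ cutSides S, s ⊆ atomOf C x)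
    hA ⟨a, ha, hax⟩ ?_ hT⟩
  rintro S - S' hS' hSS' ⟨s, hs, hsx⟩
  obtain ⟨s', hs', y, hsy⟩ := side_in_atom S' hS'
  obtain ⟨z, hz⟩ := hSS'.inter_nonempty hs hs'
  obtain ⟨hzs, hzs'⟩ := Finset.mem_inter.1 hz
  have hyx : atomOf C y = atomOf C x :=
    (atomOf_eq_of_mem (hsy hzs')).symm.trans (atomOf_eq_of_mem (hsx hzs))
  exact ⟨s', hs', hyx ▸ hsy⟩

theorem exists_atomOf_forall_notMem_eq [Nonempty V] (hC : IsCutComponent N C)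
    (hC' : IsCutComponent N C') (hne : C ≠ C') :
    ∃ x, ∀ y ∉ atomOf C x, ∀ z ∉ atomOf C x, atomOf C' y = atomOf C' z := by
  obtain ⟨x, hx⟩ := hC.exists_forall_cutSides_subset_atomOf hC' hne
  refine ⟨x, fun y hy z hz => atomOf_eq_of_mem (mem_atomOf.2 fun T hT => ?_)⟩
  obtain ⟨t, ht, htx⟩ := hx T hT
  exact mem_iff_mem_of_mem_cutSides ht (iff_of_false (fun h => hy (htx h)) fun h => hz (htx h))

end IsCutComponent

theorem stmt_11_general {V : Type*} [Fintype V] [DecidableEq V]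
    (N : Set (Finset V)) (u v w : V) (C C' : Set (Finset V))
    (hC : IsCutComponent N C) (hC' : IsCutComponent N C')
    (hCuv : atomOf C u ≠ atomOf C v)
    (hCuw : atomOf C u ≠ atomOf C w) (hCvw : atomOf C v ≠ atomOf C w)
    (hC'uv : atomOf C' u ≠ atomOf C' v)
    (hC'uw : atomOf C' u ≠ atomOf C' w) (hC'vw : atomOf C' v ≠ atomOf C' w) :
    C = C' := by
  have : Nonempty V := ⟨u⟩
  by_contra hne
  obtain ⟨x, hx⟩ := hC.exists_atomOf_forall_notMem_eq hC' hne
  have mem_or_mem {y z : V} (hyz : atomOf C' y ≠ atomOf C' z) :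
      y ∈ atomOf C x ∨ z ∈ atomOf C x := by
    by_contra! h
    exact hyz (hx y h.1 z h.2)
  have eq_of_mem {y z : V} (hy : y ∈ atomOf C x) (hz : z ∈ atomOf C x) :
      atomOf C y = atomOf C z :=
    (atomOf_eq_of_mem hy).trans (atomOf_eq_of_mem hz).symm
  rcases mem_or_mem hC'uv with hu | hv
  · rcases mem_or_mem hC'vw with hv | hw
    · exact hCuv (eq_of_mem hu hv)
    · exact hCuw (eq_of_mem hu hw)
  · rcases mem_or_mem hC'uw with hu | hw
    · exact hCuv (eq_of_mem hu hv)
    · exact hCvw (eq_of_mem hv hw)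

/-- Let `N` be a family of cuts of a finite set `V` none of which contains `u₀` or `v₀`.
Then for any `u, v ∈ V` there is at most one connected component `C` of `N` in which
`u` and `v` lie in two distinct atoms, neither of which is the root atom (the atom
containing `u₀` and `v₀`). -/
theorem stmt_11 {V : Type*} [Fintype V] [DecidableEq V]
    (u₀ v₀ : V) (huv : u₀ ≠ v₀)
    (N : Set (Finset V)) (hN : ∀ S ∈ N, S.Nonempty ∧ S ≠ Finset.univ)
    (hroot : ∀ S ∈ N, u₀ ∉ S ∧ v₀ ∉ S)
    (u v : V) (C C' : Set (Finset V))
    (hC : IsCutComponent N C) (hC' : IsCutComponent N C')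
    (hCdist : atomOf C u ≠ atomOf C v)
    (hCu : atomOf C u ≠ atomOf C u₀) (hCv : atomOf C v ≠ atomOf C u₀)
    (hC'dist : atomOf C' u ≠ atomOf C' v)
    (hC'u : atomOf C' u ≠ atomOf C' u₀) (hC'v : atomOf C' v ≠ atomOf C' u₀) :
    C = C' := by
  exact stmt_11_general N u v u₀ C C' hC hC' hCdist hCu hCv hC'dist hC'u hC'v
end
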